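/- arXiv:1301.4616 — 8 statements merged into one kernel-verified Lean document; each statement's English description precedes it below -/
import Mathlib

section
/- Let G be a group, H and K subgroups of G, and g ∈ G. In the comma category C = Comma (B ι_K) (B ι_H) of the functors induced by the inclusions ι_K : K →* G and ι_H : H →* G (objects: elements of G; morphisms g ⟶ g': pairs (k, h) ∈ K × H with g' = h * g * k⁻¹), the automorphism group of the object g is isomorphic, via the map (k, h) ↦ h, to the subgroup H ⊓ g K g⁻¹ of G, where g K g⁻¹ = Subgroup.map ((MulAut.conj g).toMonoidHom) K. -/
/-!
An endomorphism of the object `g` is a pair `(k, h) ∈ K × H` with `g * k = h * g`, i.e.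
`h = g * k * g⁻¹`. Hence `h` lies in `H ⊓ gKg⁻¹`; it determines `k = g⁻¹ * h * g`, so that
`(k, h) ↦ h` is injective, and every element of `H ⊓ gKg⁻¹` arises in this way. The map is the
homomorphism `dosetAutToSubgroup`, and preimages are provided by `dosetCommaAut`.
-/

open CategoryTheory

/-- The object of the comma category `Comma (B ι_K) (B ι_H)` (the homotopy fibered
product `K ×_G H`) corresponding to an element `g : G`. -/
def dosetCommaObj {G : Type*} [Group G] (H K : Subgroup G) (g : G) :
    Comma (SingleObj.mapHom K G K.subtype) (SingleObj.mapHom H G H.subtype) where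
  left := SingleObj.star K
  right := SingleObj.star H
  hom := g

/-- The commuting square of an endomorphism `(k, h)` of the object `g` reads `g * k = h * g`. -/
theorem dosetCommaObj_hom_w {G : Type*} [Group G] (H K : Subgroup G) (g : G)
    (f : dosetCommaObj H K g ⟶ dosetCommaObj H K g) :
    g * K.subtype f.left = H.subtype f.right * g :=
  f.w

/-- The endomorphism `(k, h)` of the object `g` determined by a solution of `g * k = h * g`. -/
def dosetCommaHom {G : Type*} [Group G] (H K : Subgroup G) (g : G) (k : K) (h : H)
    (w : g * (k : G) = h * g) : dosetCommaObj H K g ⟶ dosetCommaObj H K g where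
  left := k
  right := h
  w := w

/-- The automorphism `(k, h)` of the object `g`, with inverse `(k⁻¹, h⁻¹)`. -/
def dosetCommaAut {G : Type*} [Group G] (H K : Subgroup G) (g : G) (k : K) (h : H)
    (w : g * (k : G) = h * g) : Aut (dosetCommaObj H K g) where
  hom := dosetCommaHom H K g k h w
  inv := dosetCommaHom H K g k⁻¹ h⁻¹ (by
    rw [Subgroup.coe_inv, Subgroup.coe_inv, eq_inv_mul_iff_mul_eq, ← mul_assoc, ← w,
      mul_inv_cancel_right])
  hom_inv_id := CommaMorphism.ext (inv_mul_cancel k) (inv_mul_cancel h)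
  inv_hom_id := CommaMorphism.ext (mul_inv_cancel k) (mul_inv_cancel h)

/-- The homomorphism `(k, h) ↦ h`. It is covariant because composition in `SingleObj` and
multiplication in `Aut` both reverse the order of the factors. -/
def dosetAutToSubgroup {G : Type*} [Group G] (H K : Subgroup G) (g : G) :
    Aut (dosetCommaObj H K g) →* ↥(H ⊓ Subgroup.map (MulAut.conj g).toMonoidHom K) where
  toFun φ := ⟨H.subtype φ.hom.right, SetLike.coe_mem (p := H) φ.hom.right,
    K.subtype φ.hom.left, SetLike.coe_mem (p := K) φ.hom.left,
    mul_inv_eq_of_eq_mul (dosetCommaObj_hom_w H K g φ.hom)⟩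
  map_one' := rfl
  map_mul' _ _ := rfl

/-- In the homotopy fibered product `K ×_G H` of the inclusions of two subgroups
`K, H ≤ G`, the automorphism group of the object corresponding to `g : G` is
isomorphic, via the map `(k, h) ↦ h`, to the subgroup `H ⊓ gKg⁻¹` of `G`. -/
theorem aut_dosetCommaObj_mulEquiv {G : Type*} [Group G] (H K : Subgroup G) (g : G) :
    ∃ e : Aut (dosetCommaObj H K g) ≃*
        ↥(H ⊓ Subgroup.map (MulAut.conj g).toMonoidHom K),
      ∀ φ : Aut (dosetCommaObj H K g), (e φ : G) = H.subtype φ.hom.right := by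
  refine ⟨MulEquiv.ofBijective (dosetAutToSubgroup H K g) ⟨fun φ ψ hφψ => ?_, ?_⟩,
    fun _ => rfl⟩
  · have hr : H.subtype φ.hom.right = H.subtype ψ.hom.right :=
      congrArg (H ⊓ Subgroup.map (MulAut.conj g).toMonoidHom K).subtype hφψ
    have hl : K.subtype φ.hom.left = K.subtype ψ.hom.left := by
      apply mul_left_cancel (a := g)
      rw [dosetCommaObj_hom_w H K g φ.hom, dosetCommaObj_hom_w H K g ψ.hom, hr]
    exact Iso.ext (CommaMorphism.ext (K.subtype_injective hl) (H.subtype_injective hr))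
  · rintro ⟨h, hH, k, hK, hk⟩
    have hk' : g * k * g⁻¹ = h := hk
    exact ⟨dosetCommaAut H K g ⟨k, hK⟩ ⟨h, hH⟩ (mul_inv_eq_iff_eq_mul.mp hk'), rfl⟩
end

section
/- Let α : H →* G and β : K →* G be surjective group homomorphisms between groups. Then the comma category Comma (B α) (B β) — whose objects are the elements of G and whose morphisms g ⟶ g' are pairs (h, k) ∈ H × K with g' = β(k) * g * α(h)⁻¹ — is equivalent to SingleObj L, where L is the pullback group L = {(h, k) : H × K // α h = β k}, a subgroup of H × K. (The homotopy fibered product of two surjections of groups is equivalent to the group pullback.) -/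
/-!
The groupoid `Comma (B α) (B β)` has the elements of `G` as objects, and the automorphism group
of `1 : G` is exactly the pullback group, so `pullbackToComma` is fully faithful. It is
essentially surjective because every `g : G` is `β k` for some `k`, and then `(1, k)` is an
isomorphism `1 ≅ g`.
-/

open CategoryTheory

/-- The pullback group of two homomorphisms `α : H →* G`, `β : K →* G`: the subgroup
`{(h, k) : H × K // α h = β k}` of `H × K`. -/
def pullbackSubgroup {H K G : Type*} [Group H] [Group K] [Group G]
    (α : H →* G) (β : K →* G) : Subgroup (H × K) where
  carrier := {p | α p.1 = β p.2}
  one_mem' := by simp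
  mul_mem' := by
    intro a b ha hb
    simp only [Set.mem_setOf_eq, Prod.fst_mul, Prod.snd_mul, map_mul] at *
    rw [ha, hb]
  inv_mem' := by
    intro a ha
    simp only [Set.mem_setOf_eq, Prod.fst_inv, Prod.snd_inv, map_inv] at *
    rw [ha]

/-- The functor `SingleObj L ⥤ Comma (B α) (B β)` sending the unique object to `1 : G` and
`(h, k)` to itself, viewed as an endomorphism of `1`. -/
def pullbackToComma {H K G : Type*} [Group H] [Group K] [Group G]
    (α : H →* G) (β : K →* G) :
    SingleObj ↥(pullbackSubgroup α β) ⥤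
      Comma (SingleObj.mapHom H G α) (SingleObj.mapHom K G β) where
  obj _ :=
    { left := SingleObj.star H
      right := SingleObj.star K
      hom := (1 : G) }
  map p :=
    { left := p.1.1
      right := p.1.2
      w := show (1 : G) * α p.1.1 = β p.1.2 * 1 by
        rw [one_mul, mul_one]
        exact p.2 }
  map_id _ := rfl
  map_comp _ _ := rfl

/-- The homotopy fibered product of two surjections of groups `α : H ↠ G`, `β : K ↠ G`
(realized as the comma category `Comma (B α) (B β)`) is equivalent to the one-object
groupoid on the pullback group `L = {(h, k) : H × K // α h = β k}`. -/
theorem comma_of_surjections_equiv_pullback {H K G : Type*} [Group H] [Group K] [Group G]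
    (α : H →* G) (β : K →* G) (hα : Function.Surjective α) (hβ : Function.Surjective β) :
    Nonempty (Comma (SingleObj.mapHom H G α) (SingleObj.mapHom K G β) ≌
      SingleObj ↥(pullbackSubgroup α β)) := by
  let F := pullbackToComma α β
  have : F.Faithful := ⟨fun {_ _ _ _} e =>
    Subtype.ext (Prod.ext (congrArg CommaMorphism.left e) (congrArg CommaMorphism.right e))⟩
  have : F.Full := ⟨fun {_ _} f => by
    have w : (1 : G) * α f.left = β f.right * 1 := f.w
    rw [one_mul, mul_one] at w
    exact ⟨⟨(f.left, f.right), w⟩, rfl⟩⟩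
  have : F.EssSurj := ⟨fun X => by
    -- Any lift `k` of `X.hom` along `β` gives an isomorphism `(1, k) : 1 ≅ X.hom`.
    obtain ⟨k, hk⟩ := hβ X.hom
    have w : (X.hom : G) * α 1 = β k * 1 := by rw [map_one, hk]
    let e : SingleObj.star K ≅ X.right := (Groupoid.isoEquivHom _ _).symm k
    exact ⟨SingleObj.star _, ⟨Comma.isoMk (Iso.refl _) e w⟩⟩⟩
  have : F.IsEquivalence := { }
  exact ⟨F.asEquivalence.symm⟩
end

section
/- Let R be a commutative ring, ι a finite type, A : Matrix ι ι R, n : ℕ, and σ a permutation of Fin n. Then ∑_{j : Fin n → ι} ∏_{i : Fin n} A (j (σ i)) (j i) = (Matrix.trace A) ^ (n - σ.support.card) * ((σ.cycleType).map (fun k => Matrix.trace (A ^ k))).prod. (The left-hand side is the trace of the wreath-product element (σ; g, …, g) acting on the n-th tensor power of a representation in which g acts by the matrix A — first g acting in every tensor factor, then σ permuting the factors — and the right-hand side is the product, over the cycles of σ, of the traces of the corresponding powers of A, fixed points of σ each contributing a factor Matrix.trace A.) -/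
/-!
For a permutation `σ` of any finite type `α`, the sum `∑ j : α → ι, ∏ i, A (j (σ i)) (j i)`
is multiplicative over a decomposition of `α` into two `σ`-stable parts (`permSum_eq_mul`),
and so is the right-hand side, because cycle types add (`cycleType_eq_add`). Induction on the
size of `α`, splitting off the cycle through one non-fixed point, reduces the claim to two
cases: the identity, where the sum is `(∑ x, A x x) ^ card α`, and a single cycle filling `α`.
The sum depends only on `σ` up to conjugation by bijections (`permSum_congr`), so in the second
case `σ` may be taken to be the rotation of `Fin k`. There it is a sum over closed walks of
length `k`, which is the trace of `A ^ k` (`sum_path_eq_trace`).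
-/

section PermSum

open Equiv Equiv.Perm

variable {R : Type*} [CommRing R] {ι : Type*} [Fintype ι]

/-- The trace of `σ`, composed with `A` in every factor, on the tensor power indexed by `α`;
an arbitrary finite index type is allowed so that `σ` can be restricted to stable subsets. -/
def permSum (A : Matrix ι ι R) {α : Type*} [Fintype α] [DecidableEq α] (σ : Perm α) : R :=
  ∑ j : α → ι, ∏ i : α, A (j (σ i)) (j i)

lemma permSum_congr (A : Matrix ι ι R) {α β : Type*} [Fintype α] [DecidableEq α] [Fintype β]
    [DecidableEq β] (e : α ≃ β) {σ : Perm α} {τ : Perm β} (h : ∀ x, e (σ x) = τ (e x)) :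
    permSum A σ = permSum A τ := by
  unfold permSum
  refine Fintype.sum_equiv (e.arrowCongr (Equiv.refl ι)) _ _ fun j => ?_
  refine Fintype.prod_equiv e _ _ fun i => ?_
  simp [← h]

/-- Sum over walks of length `k`, closed up by an arbitrary matrix `B` from the endpoint back to
the start. Keeping `B` free makes the induction work: the last step of the walk is absorbed by
replacing `B` with `B * A`. -/
lemma sum_path_eq_trace [DecidableEq ι] (A : Matrix ι ι R) (k : ℕ) (B : Matrix ι ι R) :
    ∑ j : Fin (k + 1) → ι,
      B (j 0) (j (Fin.last k)) * ∏ i : Fin k, A (j i.succ) (j i.castSucc) =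
      Matrix.trace (B * A ^ k) := by
  induction k generalizing B with
  | zero =>
    rw [pow_zero, mul_one]
    exact Fintype.sum_equiv (Equiv.funUnique (Fin 1) ι) _ _ fun j => by simp
  | succ k ih =>
    rw [pow_succ', ← mul_assoc, ← ih, ← (Fin.snocEquiv fun _ : Fin (k + 2) => ι).sum_comp,
      Fintype.sum_prod_type_right]
    refine Finset.sum_congr rfl fun j _ => ?_
    rw [Matrix.mul_apply, Finset.sum_mul]
    refine Finset.sum_congr rfl fun y _ => ?_
    have h0 : (Fin.snoc j y : Fin (k + 2) → ι) 0 = j 0 := Fin.snoc_castSucc (α := fun _ => ι) y j 0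
    have h (i : Fin (k + 1)) : (Fin.snoc j y : Fin (k + 2) → ι) i.castSucc = j i :=
      Fin.snoc_castSucc (α := fun _ => ι) y j i
    have hl : (Fin.snoc j y : Fin (k + 2) → ι) (Fin.last _) = y :=
      Fin.snoc_last (α := fun _ => ι) y j
    simp only [Fin.snocEquiv_apply, Fin.prod_univ_castSucc, h0, h, hl, Fin.succ_last,
      Fin.succ_castSucc]
    ring

lemma permSum_finRotate [DecidableEq ι] (A : Matrix ι ι R) (k : ℕ) :
    permSum A (finRotate (k + 1)) = Matrix.trace (A ^ (k + 1)) := by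
  rw [pow_succ', ← sum_path_eq_trace]
  refine Finset.sum_congr rfl fun j _ => ?_
  rw [Fin.prod_univ_castSucc, finRotate_last, mul_comm]
  simp

lemma permSum_one (A : Matrix ι ι R) {α : Type*} [Fintype α] [DecidableEq α] :
    permSum A (1 : Perm α) = Matrix.trace A ^ Fintype.card α := by
  have := (Finset.prod_univ_sum (fun _ : α => (Finset.univ : Finset ι)) (fun _ x => A x x))
  simp [permSum, Matrix.trace] at this ⊢
  exact this.symm

lemma permSum_eq_mul (A : Matrix ι ι R) {α : Type*} [Fintype α] [DecidableEq α]
    (σ : Perm α) (p : α → Prop) [DecidablePred p] (h : ∀ x, p (σ x) ↔ p x) :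
    permSum A σ = permSum A (σ.subtypePerm h) *
      permSum A (σ.subtypePerm (p := fun x => ¬ p x) fun x => not_congr (h x)) := by
  unfold permSum
  rw [Finset.sum_mul_sum, ← Fintype.sum_prod_type']
  refine Fintype.sum_equiv (Equiv.piEquivPiSubtypeProd p fun _ => ι) _ _ fun j => ?_
  rw [← Fintype.prod_subtype_mul_prod_subtype p]
  rfl

/-- The case of a single cycle without fixed points, which is conjugate to a rotation of `Fin k`. -/
lemma permSum_of_cycleType [DecidableEq ι] (A : Matrix ι ι R) {α : Type*} [Fintype α]
    [DecidableEq α] (σ : Perm α) (h : σ.cycleType = {Fintype.card α}) :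
    permSum A σ = Matrix.trace (A ^ Fintype.card α) := by
  have h2 : 2 ≤ Fintype.card α := two_le_of_mem_cycleType (σ := σ) (by simp [h])
  generalize hk : Fintype.card α = k at *
  obtain ⟨k, rfl⟩ := Nat.exists_eq_add_of_le' h2
  let e := Fintype.equivFinOfCardEq hk
  have hc : (e.permCongr σ).cycleType = (finRotate (k + 2)).cycleType := by
    rw [cycleType_finRotate, ← h]
    -- Transport along `e` is extension to the trivial subtype of `Fin (k + 2)`.
    rw [← cycleType_extendDomain (g := σ)
      (e.trans (Equiv.subtypeUnivEquiv (p := fun _ : Fin (k + 2) => True) fun _ => trivial).symm)]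
    congr 1
  -- Equal cycle types make the transported permutation conjugate to the rotation.
  obtain ⟨c, hc⟩ := isConj_iff.1 (isConj_iff_cycleType_eq.2 hc)
  rw [← permSum_finRotate]
  refine permSum_congr A (e.trans c) fun x => ?_
  simp [← hc]

lemma cycleType_eq_add {α : Type*} [Fintype α] [DecidableEq α]
    (σ : Perm α) (p : α → Prop) [DecidablePred p] (h : ∀ x, p (σ x) ↔ p x) :
    σ.cycleType = (σ.subtypePerm h).cycleType +
      (σ.subtypePerm (p := fun x => ¬ p x) fun x => not_congr (h x)).cycleType := by
  have hd : Disjoint (ofSubtype (σ.subtypePerm h))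
      (ofSubtype (σ.subtypePerm (p := fun x => ¬ p x) fun x => not_congr (h x))) := by
    intro x
    by_cases hx : p x
    · exact .inr (ofSubtype_apply_of_not_mem (p := fun x => ¬ p x) _ (not_not.2 hx))
    · exact .inl (ofSubtype_apply_of_not_mem _ hx)
  rw [← cycleType_ofSubtype (g := σ.subtypePerm h), ← cycleType_ofSubtype
    (g := σ.subtypePerm (p := fun x => ¬ p x) fun x => not_congr (h x)), ← hd.cycleType_mul]
  congr 1
  ext x
  by_cases hx : p x
  · rw [mul_apply, ofSubtype_apply_of_not_mem (p := fun x => ¬ p x) _ (not_not.2 hx), ofSubtype_apply_of_mem _ hx]; rfl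
  · rw [mul_apply, ofSubtype_apply_of_mem (p := fun x => ¬ p x) _ hx, subtypePerm_apply,
      ofSubtype_apply_of_not_mem _ ((not_congr (h x)).2 hx)]

theorem permSum_eq [DecidableEq ι] (A : Matrix ι ι R) {α : Type*} [Fintype α] [DecidableEq α]
    (σ : Perm α) :
    permSum A σ = Matrix.trace A ^ (Fintype.card α - σ.support.card) *
        ((σ.cycleType).map fun k => Matrix.trace (A ^ k)).prod := by
  induction hN : Fintype.card α using Nat.strong_induction_on generalizing α with
  | _ N ih =>
  subst hN
  by_cases hσ : σ = 1
  · subst hσ; simp [permSum_one]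
  obtain ⟨x, hx⟩ : ∃ x, σ x ≠ x := by
    by_contra! hc
    exact hσ (Equiv.ext hc)
  have h : ∀ y, σ.SameCycle x (σ y) ↔ σ.SameCycle x y := fun y => sameCycle_apply_right
  have hlt : Fintype.card {y // ¬ σ.SameCycle x y} < Fintype.card α :=
    Fintype.card_subtype_lt (x := x) (not_not.2 (SameCycle.refl σ x))
  have hcard : Fintype.card {y // σ.SameCycle x y} + Fintype.card {y // ¬ σ.SameCycle x y} =
      Fintype.card α := by
    rw [← Fintype.card_sum]; exact Fintype.card_congr (Equiv.sumCompl _)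
  have hcyc : (σ.subtypePerm h).cycleType = {Fintype.card {y // σ.SameCycle x y}} := by
    rw [← cycleType_ofSubtype]
    -- `cycleOf` is by definition this extension of the restriction of `σ`.
    change (σ.cycleOf x).cycleType = _
    rw [(isCycle_cycleOf σ hx).cycleType, Fintype.card_subtype]
    congr 2
    ext y
    rw [mem_support_cycleOf_iff' hx, Finset.mem_filter_univ]
  rw [permSum_eq_mul A σ (σ.SameCycle x) h, permSum_of_cycleType A _ hcyc, ih _ hlt _ rfl,
    ← sum_cycleType σ, cycleType_eq_add σ (σ.SameCycle x) h, hcyc, ← sum_cycleType, ← hcard]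
  simp only [Multiset.sum_add, Multiset.sum_singleton, Multiset.map_add, Multiset.map_singleton,
    Multiset.prod_add, Multiset.prod_singleton, Nat.add_sub_add_left]
  ring

end PermSum

/-- The trace of the wreath-product element `(σ; g, …, g)` acting on the `n`-th tensor
power of a representation where `g` acts by the matrix `A` equals the product over the
cycles of `σ` of the traces of the corresponding powers of `A`, with fixed points of `σ`
each contributing a factor `Matrix.trace A`. -/
theorem trace_tensor_power_perm {R : Type*} [CommRing R] {ι : Type*} [Fintype ι]
    [DecidableEq ι] (A : Matrix ι ι R) (n : ℕ) (σ : Equiv.Perm (Fin n)) :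
    ∑ j : Fin n → ι, ∏ i : Fin n, A (j (σ i)) (j i) =
      Matrix.trace A ^ (n - σ.support.card) *
        ((σ.cycleType).map fun k => Matrix.trace (A ^ k)).prod := by
  simpa [permSum] using permSum_eq A σ
end

section
/- Let K be a field, V a finite-dimensional K-vector space, n ≥ 1, and f : Fin n → (V →ₗ[K] V) a family of linear endomorphisms. Let T be the linear endomorphism of the n-th tensor power ⨂[K]^n V determined on pure tensors by T (v₀ ⊗ v₁ ⊗ ⋯ ⊗ v_{n-1}) = (f_{n-1} v_{n-1}) ⊗ (f₀ v₀) ⊗ (f₁ v₁) ⊗ ⋯ ⊗ (f_{n-2} v_{n-2}); that is, T applies f_i in the i-th slot and then cyclically shifts the tensor slots by one (T is the composite of PiTensorProduct.map f with the reindexing isomorphism of ⨂[K]^n V induced by the cyclic rotation i ↦ i + 1 of Fin n). Then LinearMap.trace K _ T = LinearMap.trace K V (f_{n-1} ∘ₗ f_{n-2} ∘ₗ ⋯ ∘ₗ f₀), the trace of the composite of the f_i taken along the cycle. -/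
/-!
Choose a basis `b` of `V` and let `M i` be the matrix of `f i`. In the induced basis of the tensor
power, indexed by `p : Fin (n + 1) → ι`, the diagonal entry of the shifted map at `p` is
`∏ i, M i (p (i + 1)) (p i)`, with `i + 1` taken cyclically. Summing over all `p` is the expansion
of the trace of `M n * ⋯ * M 0` over closed paths of length `n + 1`, which follows from the
expansion of a single matrix entry of such a product over paths (`reverse_prod_apply`).
-/

open scoped TensorProduct

/-- Entry `(c, a)` of `M n * ⋯ * M 0` as a sum over paths from `a` to `c` with intermediate vertices
`p`: step `i` of the path goes from `Fin.cons a p i` to `Fin.snoc p c i`. -/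
lemma reverse_prod_apply {K ι : Type*} [CommRing K] [Fintype ι] [DecidableEq ι] (n : ℕ)
    (M : Fin (n + 1) → Matrix ι ι K) (c a : ι) :
    (List.ofFn M).reverse.prod c a =
      ∑ p : Fin n → ι, ∏ i : Fin (n + 1),
        M i (Fin.snoc (α := fun _ => ι) p c i) (Fin.cons (α := fun _ => ι) a p i) := by
  induction n generalizing a with
  | zero => simp [Fin.snoc]
  | succ n ih =>
    rw [List.ofFn_succ, List.reverse_cons, List.prod_append, List.prod_singleton,
      Matrix.mul_apply, ← (Fin.consEquiv (fun _ : Fin (n + 1) => ι)).sum_comp,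
      Fintype.sum_prod_type]
    refine Finset.sum_congr rfl fun b _ => ?_
    rw [ih, Finset.sum_mul]
    refine Finset.sum_congr rfl fun p _ => ?_
    rw [Fin.prod_univ_succ (n := n + 1), mul_comm]
    simp [Fin.consEquiv, ← Fin.cons_snoc_eq_snoc_cons]

/-- The trace of `M n * ⋯ * M 0` as a sum over closed paths `p`. -/
lemma trace_reverse_prod {K ι : Type*} [CommRing K] [Fintype ι] [DecidableEq ι] (n : ℕ)
    (M : Fin (n + 1) → Matrix ι ι K) :
    (List.ofFn M).reverse.prod.trace =
      ∑ p : Fin (n + 1) → ι, ∏ i, M i (p (finRotate (n + 1) i)) (p i) := by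
  rw [← (Fin.consEquiv (fun _ : Fin (n + 1) => ι)).sum_comp, Fintype.sum_prod_type, Matrix.trace]
  refine Finset.sum_congr rfl fun a _ => ?_
  rw [Matrix.diag_apply, reverse_prod_apply]
  refine Finset.sum_congr rfl fun p _ => ?_
  rw [Fin.snoc_eq_cons_rotate]
  rfl

/-- Let `f : Fin (n+1) → End V` be a family of endomorphisms of a finite-dimensional
vector space, and let `T` be the endomorphism of the `(n+1)`-st tensor power of `V`
that applies `f i` in the `i`-th slot and then cyclically shifts the tensor slots by
one (so `T (v₀ ⊗ ⋯ ⊗ vₙ) = fₙ vₙ ⊗ f₀ v₀ ⊗ ⋯ ⊗ f_{n-1} v_{n-1}`).  Then the trace of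
`T` equals the trace of the composite of the `f i` taken along the cycle. -/
theorem trace_cyclic_shift_tensor_power (K : Type*) [Field K] (V : Type*)
    [AddCommGroup V] [Module K V] [FiniteDimensional K V] (n : ℕ)
    (f : Fin (n + 1) → Module.End K V) :
    LinearMap.trace K (⨂[K] _ : Fin (n + 1), V)
        ((PiTensorProduct.reindex K (fun _ : Fin (n + 1) => V)
            (finRotate (n + 1))).toLinearMap ∘ₗ
          PiTensorProduct.map fun i => f i) =
      LinearMap.trace K V ((List.ofFn f).reverse.prod) := by
  classical
  let b := Module.finBasis K V
  have hR : LinearMap.trace K V ((List.ofFn f).reverse.prod) =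
      (List.ofFn fun i => LinearMap.toMatrix b b (f i)).reverse.prod.trace := by
    rw [LinearMap.trace_eq_matrix_trace K b]
    change (LinearMap.toMatrixAlgEquiv b _).trace = _
    rw [map_list_prod, List.map_reverse, List.map_ofFn]
    rfl
  rw [hR, trace_reverse_prod,
    LinearMap.trace_eq_matrix_trace K (Basis.piTensorProduct fun _ : Fin (n + 1) => b),
    Matrix.trace]
  refine Finset.sum_congr rfl fun p _ => ?_
  rw [Matrix.diag_apply, LinearMap.toMatrix_apply, Basis.piTensorProduct_apply,
    LinearMap.comp_apply, PiTensorProduct.map_tprod, LinearEquiv.coe_coe,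
    PiTensorProduct.reindex_tprod, Basis.piTensorProduct_repr_tprod_apply,
    ← Equiv.prod_comp (finRotate (n + 1))]
  simp only [Equiv.symm_apply_apply, LinearMap.toMatrix_apply]
end

section
/- Let K be a field, V a finite-dimensional K-vector space, n ≥ 1, and g : V →ₗ[K] V a linear endomorphism. Let T be the linear endomorphism of the n-th tensor power ⨂[K]^n V determined on pure tensors by T (v₀ ⊗ v₁ ⊗ ⋯ ⊗ v_{n-1}) = (g v_{n-1}) ⊗ v₀ ⊗ v₁ ⊗ ⋯ ⊗ v_{n-2} (apply g in the last slot and cyclically shift the slots by one; this is the action of the element (ς_n; 1, …, 1, g) of the wreath product S_n ≀ GL(V) on V^{⊗n}, where ς_n is the n-cycle). Then LinearMap.trace K _ T = LinearMap.trace K V g. -/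
/-!
Fix a basis `b` of `V` and compute the trace in the induced basis of the tensor power, whose
elements are indexed by multi-indices `p = (p₀, …, pₙ)`. The diagonal entry at `p` is
`δ(p₀, p₁) ⋯ δ(pₙ₋₁, pₙ) · g(p₀, pₙ)`, where `g(i, j)` are the matrix entries of `g`. It vanishes
unless `p` is a constant multi-index `(i, …, i)`, where it equals `g(i, i)`; the sum over all `p`
is therefore the trace of `g`.
-/

open scoped TensorProduct

/-- Let `g` be an endomorphism of a finite-dimensional vector space `V` and let `T` be
the endomorphism of the `(n+1)`-st tensor power of `V` given by
`T (v₀ ⊗ ⋯ ⊗ vₙ) = (g vₙ) ⊗ v₀ ⊗ ⋯ ⊗ v_{n-1}` (apply `g` in the last slot and then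
cyclically shift the slots by one; the action of the wreath-product element
`(ςₙ; 1, …, 1, g)` on the tensor power).  Then the trace of `T` equals the trace
of `g`. -/
theorem trace_cyclic_shift_last_slot (K : Type*) [Field K] (V : Type*)
    [AddCommGroup V] [Module K V] [FiniteDimensional K V] (n : ℕ) (g : V →ₗ[K] V) :
    LinearMap.trace K (⨂[K] _ : Fin (n + 1), V)
        ((PiTensorProduct.reindex K (fun _ : Fin (n + 1) => V)
            (finRotate (n + 1))).toLinearMap ∘ₗ
          PiTensorProduct.map
            (Function.update (fun _ : Fin (n + 1) => (LinearMap.id : V →ₗ[K] V))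
              (Fin.last n) g)) =
      LinearMap.trace K V g := by
  let b := Module.finBasis K V
  let B := Basis.piTensorProduct (fun _ : Fin (n + 1) => b)
  rw [LinearMap.trace_eq_matrix_trace K B, LinearMap.trace_eq_matrix_trace K b]
  simp only [Matrix.trace, Matrix.diag_apply]
  have diag (p : Fin (n + 1) → Fin (Module.finrank K V)) :
      LinearMap.toMatrix B B
        ((PiTensorProduct.reindex K (fun _ : Fin (n + 1) => V)
            (finRotate (n + 1))).toLinearMap ∘ₗ
          PiTensorProduct.map
            (Function.update (fun _ : Fin (n + 1) => (LinearMap.id : V →ₗ[K] V))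
              (Fin.last n) g)) p p =
      (∏ j : Fin n, if p j.castSucc = p j.succ then (1 : K) else 0) *
        LinearMap.toMatrix b b g (p 0) (p (Fin.last n)) := by
    rw [LinearMap.toMatrix_apply, LinearMap.comp_apply, Basis.piTensorProduct_apply,
      PiTensorProduct.map_tprod, LinearEquiv.coe_coe, PiTensorProduct.reindex_tprod,
      Basis.piTensorProduct_repr_tprod_apply]
    -- Index the product by the source slot, so that the last slot carries `g`.
    rw [← Equiv.prod_comp (finRotate (n + 1)), Fin.prod_univ_castSucc]
    simp only [Equiv.symm_apply_apply, Function.update_self, LinearMap.toMatrix_apply]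
    rw [finRotate_last]
    congr 1
    refine Finset.prod_congr rfl fun j _ => ?_
    have hrot : finRotate (n + 1) j.castSucc = j.succ := finRotate_of_lt j.isLt
    rw [Function.update_of_ne (Fin.castSucc_lt_last j).ne, hrot, LinearMap.id_apply,
      Module.Basis.repr_self, Finsupp.single_apply]
  simp_rw [diag]
  symm
  refine Fintype.sum_of_injective (fun i _ => i) (fun i j h => congrFun h 0) _ _ ?_ ?_
  · intro p hp
    -- A nonzero product would make `p` constant.
    have hne : ∃ j : Fin n, p j.castSucc ≠ p j.succ := by
      by_contra! hall
      refine hp ⟨p 0, funext fun i => ?_⟩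
      induction i using Fin.induction with
      | zero => rfl
      | succ j ih => exact ih.trans (hall j)
    obtain ⟨j, hj⟩ := hne
    rw [Finset.prod_eq_zero (Finset.mem_univ j) (if_neg hj), zero_mul]
  · intro i
    simp
end

section
/- Let φ : G →* H be any group homomorphism. Let Δ : H →* H × H be the diagonal homomorphism h ↦ (h, h) and let μ : H × G →* H × H be MonoidHom.prodMap (MonoidHom.id H) φ, i.e. μ(t, u) = (t, φ u). In the comma category Comma (B Δ) (B μ), objects are elements (a, b) of H × H and a morphism (a, b) ⟶ (a', b') is a pair (s, (t, u)) ∈ H × (H × G) with a' = t * a * s⁻¹ and b' = φ(u) * b * s⁻¹. Then the functor SingleObj G ⥤ Comma (B Δ) (B μ) sending the unique object to the object (1, 1) and the arrow g to the morphism (φ g, (φ g, g)) is an equivalence of categories. (This exhibits the square underlying the Frobenius axiom as a homotopy pullback square of groupoids.) -/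
/-!
The comparison functor is faithful because `g` is the last component of `(φ g, (φ g, g))`.
It is full because an endomorphism `(s, (t, u))` of `(1, 1)` satisfies `s = t` and `s = φ u`,
hence is the image of `u`. It is essentially surjective because `(b⁻¹, (a * b⁻¹, 1))` is an
isomorphism from `(1, 1)` to an arbitrary object `(a, b)`.
-/

open CategoryTheory

variable {G H : Type*} [Group G] [Group H]

/-- The comparison functor from `SingleObj G` to the homotopy pullback (comma category)
of the diagonal `B Δ : SingleObj H ⥤ SingleObj (H × H)` and
`B (id × φ) : SingleObj (H × G) ⥤ SingleObj (H × H)`: it sends the unique object to the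
comma object `(1, 1)` and the arrow `g` to the morphism `(φ g, (φ g, g))`. -/
def frobeniusComparison (φ : G →* H) :
    SingleObj G ⥤
      Comma (SingleObj.mapHom H (H × H) ((MonoidHom.id H).prod (MonoidHom.id H)))
        (SingleObj.mapHom (H × G) (H × H) ((MonoidHom.id H).prodMap φ)) where
  obj _ :=
    { left := SingleObj.star H
      right := SingleObj.star (H × G)
      hom := ((1 : H), (1 : H)) }
  map g :=
    { left := φ g
      right := (φ g, g)
      w := by
        show (((1 : H), (1 : H)) : H × H) * (φ g, φ g) = (φ g, φ g) * ((1 : H), (1 : H))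
        simp }
  map_id _ := by
    apply CommaMorphism.ext
    · show φ 1 = 1
      simp
    · show ((φ 1, (1 : G)) : H × G) = (1, 1)
      simp
  map_comp f g := by
    apply CommaMorphism.ext
    · show φ (g * f) = φ g * φ f
      exact map_mul φ g f
    · show ((φ (g * f), g * f) : H × G) = ((φ g, g) : H × G) * ((φ f, f) : H × G)
      rw [Prod.mk_mul_mk, map_mul]

/-- The square underlying the Frobenius axiom is a homotopy pullback square: for any
group homomorphism `φ : G →* H`, the comparison functor from `SingleObj G` to the
homotopy fibered product of the diagonal `H → H × H` and `id × φ : H × G → H × H`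
is an equivalence of categories. -/
theorem frobeniusComparison_isEquivalence (φ : G →* H) :
    (frobeniusComparison φ).IsEquivalence := by
  have faithful : (frobeniusComparison φ).Faithful :=
    { map_injective := fun {_ _ f g} h => by
        have h' := congrArg CommaMorphism.right h
        exact congrArg (Prod.snd : H × G → G) h' }
  have full : (frobeniusComparison φ).Full :=
    { map_surjective := fun {_ _} m => by
        obtain ⟨s, ⟨t, u⟩, w⟩ := m
        -- Composition in `SingleObj` reverses multiplication, so the square of `m` reads as follows.
        have w' : (((1 : H), (1 : H)) : H × H) * ((s : H), (s : H)) =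
            ((t : H), φ u) * ((1 : H), (1 : H)) := w
        simp only [Prod.mk_mul_mk, one_mul, mul_one, Prod.mk.injEq] at w'
        obtain ⟨h₁, h₂⟩ := w'
        refine ⟨u, CommaMorphism.ext h₂.symm ?_⟩
        exact Prod.ext (h₂.symm.trans h₁) rfl }
  have essSurj : (frobeniusComparison φ).EssSurj :=
    { mem_essImage := fun Y => by
        obtain ⟨l, r, ab⟩ := Y
        obtain ⟨a, b⟩ : H × H := ab
        -- The arrow `(b⁻¹, (a * b⁻¹, 1))` goes from `(1, 1)` to `(a, b)`.
        let s : SingleObj.star H ⟶ l := (b⁻¹ : H)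
        let t : SingleObj.star (H × G) ⟶ r := ((a * b⁻¹, 1) : H × G)
        refine ⟨SingleObj.star G, ⟨Comma.isoMk (asIso s) (asIso t) ?_⟩⟩
        show ((a, b) : H × H) * (b⁻¹, b⁻¹) = (a * b⁻¹, φ 1) * ((1 : H), (1 : H))
        simp }
  exact { }
end

section
/- Let φ : G →* H be an injective group homomorphism, and let G act on H by g • h = φ(g) * h. Let pt : Discrete PUnit ⥤ SingleObj H be the functor picking out the unique object of SingleObj H. Then the comma category Comma pt (B φ) — whose objects are the elements h of H and whose morphisms h ⟶ h' are the elements g ∈ G with h' = φ(g) * h — is equivalent to the discrete category on the orbit space of this G-action on H (equivalently, the set of cosets φ(G)h). (The homotopy fiber of B φ over the basepoint of SingleObj H is the discrete groupoid of cosets.) -/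
/-!
A morphism `h ⟶ h'` of the comma category is an element `g` of `G` with `h' = φ g * h`. Such a `g`
exists exactly when `h` and `h'` lie in the same orbit, and by injectivity of `φ` there is at most
one. Hence sending `h` to its orbit is a well-defined functor to the discrete category on the orbit
space which is full (`exists_hom_of_orbit_eq`), faithful (`hom_subsingleton`) and
surjective on objects, so it is an equivalence.
-/

open CategoryTheory

/-- The action of `G` on `H` through a homomorphism `φ : G →* H` by left translation:
`g • h = φ g * h`. -/
def leftTranslationAction {G H : Type*} [Group G] [Group H] (φ : G →* H) :
    MulAction G H where
  smul g h := φ g * h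
  one_smul h := by show φ 1 * h = h; simp
  mul_smul a b h := by show φ (a * b) * h = φ a * (φ b * h); simp [mul_assoc]

/-- The comma category of the basepoint of `SingleObj H` and `B φ`. -/
abbrev CommaPoint {G H : Type*} [Group G] [Group H] (φ : G →* H) :=
  Comma (Functor.fromPUnit (SingleObj.star H)) (SingleObj.mapHom G H φ)

namespace CommaPoint

variable {G H : Type*} [Group G] [Group H] {φ : G →* H}

/-- The element of `H` underlying an object of the comma category. -/
def elt (X : CommaPoint φ) : H := X.hom

/-- The element of `G` underlying a morphism of the comma category. -/
def homElt {X Y : CommaPoint φ} (f : X ⟶ Y) : G := f.right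

/-- The commuting square of a comma morphism, read in `H`. -/
lemma elt_eq {X Y : CommaPoint φ} (f : X ⟶ Y) : Y.elt = φ (homElt f) * X.elt :=
  (mul_one (Y.elt)).symm.trans f.w

/-- A solution `g` of `h' = φ g * h` is a morphism of the comma category. -/
def homMk {X Y : CommaPoint φ} (g : G) (h : Y.elt = φ g * X.elt) : X ⟶ Y where
  left := eqToHom (Subsingleton.elim _ _)
  right := g
  w := (mul_one (Y.elt)).trans h

lemma hom_subsingleton (hφ : Function.Injective φ) (X Y : CommaPoint φ) :
    Subsingleton (X ⟶ Y) where
  allEq f g := by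
    have h : homElt f = homElt g :=
      hφ (mul_right_cancel ((elt_eq f).symm.trans (elt_eq g)))
    exact CommaMorphism.ext (Subsingleton.elim _ _) h

/-- The orbit of an object of the comma category under left translation through `φ`. -/
def orbit (X : CommaPoint φ) :
    letI := leftTranslationAction φ
    MulAction.orbitRel.Quotient G H :=
  letI := leftTranslationAction φ
  Quotient.mk (MulAction.orbitRel G H) X.elt

lemma orbit_eq_of_hom {X Y : CommaPoint φ} (f : X ⟶ Y) : X.orbit = Y.orbit := by
  letI := leftTranslationAction φ
  exact (Quotient.sound (s := MulAction.orbitRel G H) ⟨homElt f, (elt_eq f).symm⟩).symm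

lemma exists_hom_of_orbit_eq {X Y : CommaPoint φ} (h : X.orbit = Y.orbit) :
    Nonempty (X ⟶ Y) := by
  letI := leftTranslationAction φ
  obtain ⟨g, hg⟩ := Quotient.exact (s := MulAction.orbitRel G H) h.symm
  exact ⟨homMk g hg.symm⟩

/-- The functor sending an object of the comma category to its orbit. -/
def orbitFunctor (φ : G →* H) :
    letI := leftTranslationAction φ
    CommaPoint φ ⥤ Discrete (MulAction.orbitRel.Quotient G H) :=
  letI := leftTranslationAction φ
  { obj := fun X => Discrete.mk X.orbit
    map := fun f => Discrete.eqToHom (orbit_eq_of_hom f)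
    map_id := fun _ => Subsingleton.elim _ _
    map_comp := fun _ _ => Subsingleton.elim _ _ }

end CommaPoint

/-- For an injective homomorphism `φ : G →* H`, the homotopy fiber of
`B φ : SingleObj G ⥤ SingleObj H` over the basepoint of `SingleObj H` (realized as the
comma category of the functor from the point and `B φ`) is equivalent to the discrete
groupoid on the orbit space of the action `g • h = φ g * h` of `G` on `H`, i.e. on the
set of cosets `φ(G)h`. -/
theorem comma_point_equiv_discrete_orbits {G H : Type*} [Group G] [Group H]
    (φ : G →* H) (hφ : Function.Injective φ) :
    letI := leftTranslationAction φ
    Nonempty (Comma (Functor.fromPUnit (SingleObj.star H)) (SingleObj.mapHom G H φ) ≌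
      Discrete (MulAction.orbitRel.Quotient G H)) := by
  letI := leftTranslationAction φ
  let F := CommaPoint.orbitFunctor φ
  have : F.Faithful :=
    ⟨fun {X Y} _ _ _ => (CommaPoint.hom_subsingleton hφ X Y).elim _ _⟩
  have : F.Full := ⟨fun {X Y} f => by
    obtain ⟨g⟩ := CommaPoint.exists_hom_of_orbit_eq (X := X) (Y := Y) (Discrete.eq_of_hom f)
    exact ⟨g, Subsingleton.elim _ _⟩⟩
  have : F.EssSurj := ⟨fun ⟨q⟩ => by
    induction q using Quotient.inductionOn with
    | h h =>
      exact ⟨⟨⟨PUnit.unit⟩, SingleObj.star G, h⟩, ⟨Iso.refl _⟩⟩⟩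
  have : F.IsEquivalence := {}
  exact ⟨F.asEquivalence⟩
end

section
/- Let β : G →* H be a surjective group homomorphism and K a subgroup of H, with inclusion ι_K : K →* H. Then the comma category Comma (B ι_K) (B β) — whose objects are the elements h of H and whose morphisms h ⟶ h' are pairs (k, g) ∈ K × G with h' = β(g) * h * k⁻¹ — is equivalent to SingleObj (K.comap β), the one-object groupoid on the preimage subgroup β⁻¹(K) ≤ G. (The square formed by β : G ↠ H, the inclusion β⁻¹(K) ↪ G, the restriction β⁻¹(K) ↠ K, and the inclusion K ↪ H is a homotopy pullback square of groupoids.) -/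
/-!
The preimage `β⁻¹(K)` is the automorphism group of the object `1 : H` of the comma category: an
endomorphism of `1` is a pair `(k, g)` with `k = β g`, so it is determined by `g`, which can be any
element of `β⁻¹(K)`. This makes the functor `comapToComma` fully faithful. It is essentially
surjective because an object `h` with `h = β g` is isomorphic to `1` through the pair `(1, g)`.
-/

open CategoryTheory

/-- The functor from the one-object groupoid on `β⁻¹(K)` to the comma category that sends the
object to the element `1 : H` and `g` to the pair `(β g, g)`. -/
def comapToComma {G H : Type*} [Group G] [Group H] (β : G →* H) (K : Subgroup H) :
    SingleObj ↥(K.comap β) ⥤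
      Comma (SingleObj.mapHom K H K.subtype) (SingleObj.mapHom G H β) where
  obj _ := { left := SingleObj.star K, right := SingleObj.star G, hom := (1 : H) }
  map g :=
    { left := (⟨β g.1, g.2⟩ : K)
      right := g.1
      w := (one_mul (β g.1)).trans (mul_one (β g.1)).symm }
  map_id _ := CommaMorphism.ext (Subtype.ext (map_one β)) rfl
  map_comp f g := CommaMorphism.ext (Subtype.ext (map_mul β g.1 f.1)) rfl

/-- The commuting square of an endomorphism `(k, g)` of `1` reads `1 * k = β g * 1`. -/
lemma comapToComma_left_eq {G H : Type*} [Group G] [Group H] (β : G →* H) (K : Subgroup H)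
    {x y : SingleObj ↥(K.comap β)}
    (f : (comapToComma β K).obj x ⟶ (comapToComma β K).obj y) :
    Subtype.val (show K from f.left) = β f.right := by
  have h : (1 : H) * Subtype.val (show K from f.left) = β f.right * 1 := f.w
  rwa [one_mul, mul_one] at h

instance comapToComma_faithful {G H : Type*} [Group G] [Group H] (β : G →* H) (K : Subgroup H) :
    (comapToComma β K).Faithful where
  map_injective h := Subtype.ext (congrArg CommaMorphism.right h)

instance comapToComma_full {G H : Type*} [Group G] [Group H] (β : G →* H) (K : Subgroup H) :
    (comapToComma β K).Full where
  map_surjective f := by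
    have h := comapToComma_left_eq β K f
    refine ⟨⟨f.right, ?_⟩, CommaMorphism.ext (Subtype.ext h.symm) rfl⟩
    exact Subgroup.mem_comap.mpr (h ▸ Subtype.property (show K from f.left))

lemma comapToComma_essSurj {G H : Type*} [Group G] [Group H] (β : G →* H)
    (hβ : Function.Surjective β) (K : Subgroup H) : (comapToComma β K).EssSurj where
  mem_essImage Y := by
    obtain ⟨g, hg⟩ := hβ Y.hom
    -- The pair `(1, g)` is a morphism from `1` to `h = β g`, since `h * 1 = β g * 1`.
    refine ⟨SingleObj.star _, ⟨Comma.isoMk (Iso.refl _) (asIso (Y := Y.right) g) ?_⟩⟩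
    change (show H from Y.hom) * K.subtype 1 = β g * 1
    rw [map_one, hg]

/-- For a surjective homomorphism `β : G ↠ H` and a subgroup `K ≤ H`, the homotopy
fibered product of `B ι_K : SingleObj K ⥤ SingleObj H` and `B β : SingleObj G ⥤
SingleObj H` (realized as the comma category `Comma (B ι_K) (B β)`) is equivalent to
the one-object groupoid on the preimage subgroup `β⁻¹(K) ≤ G`. -/
theorem comma_inclusion_surjection_equiv_comap {G H : Type*} [Group G] [Group H]
    (β : G →* H) (hβ : Function.Surjective β) (K : Subgroup H) :
    Nonempty (Comma (SingleObj.mapHom K H K.subtype) (SingleObj.mapHom G H β) ≌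
      SingleObj ↥(K.comap β)) := by
  have := comapToComma_essSurj β hβ K
  have : (comapToComma β K).IsEquivalence := {}
  exact ⟨(comapToComma β K).asEquivalence.symm⟩
end
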